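/- Let n > 1 and u ∈ C_0^∞(ℝⁿ). Then lim_{s→0⁺} (−Δ)^s u(x) = u(x) for every x ∈ ℝⁿ. -/

import Mathlib

open MeasureTheory Filter Set
open scoped ENNReal
noncomputable section

/-- The normalizing constant `C(n,s)` of the fractional Laplacian. -/
def fracLapConst (n : ℕ) (hn : 0 < n) (s : ℝ) : ℝ :=
  (∫ ζ : EuclideanSpace ℝ (Fin n), (1 - Real.cos (ζ ⟨0, hn⟩)) / ‖ζ‖ ^ ((n : ℝ) + 2 * s))⁻¹

/-- The fractional Laplacian `(−Δ)^s`, via the weighted second-order differential quotient. -/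
def fracLap (n : ℕ) (hn : 0 < n) (s : ℝ) (u : EuclideanSpace ℝ (Fin n) → ℝ)
    (x : EuclideanSpace ℝ (Fin n)) : ℝ :=
  -(1 / 2) * fracLapConst n hn s *
    ∫ y : EuclideanSpace ℝ (Fin n),
      (u (x + y) + u (x - y) - 2 * u x) / ‖y‖ ^ ((n : ℝ) + 2 * s)

open Module in
/-- The truncated kernel is integrable. -/
lemma fl_int_max (n : ℕ) (q : ℝ) (hq : (n : ℝ) < q) :
    Integrable (fun y : EuclideanSpace ℝ (Fin n) => (max 1 ‖y‖) ^ (-q)) := by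
  have h := integrable_one_add_norm (E := EuclideanSpace ℝ (Fin n)) (μ := volume) (r := q)
    (by simpa using hq)
  have hq0 : 0 < q := lt_of_le_of_lt (Nat.cast_nonneg n) hq
  refine (h.const_mul ((1 / 2 : ℝ) ^ (-q))).mono'
    (Measurable.aestronglyMeasurable (by fun_prop)) (Eventually.of_forall fun y => ?_)
  have h0 := norm_nonneg y
  have h1 : (1 / 2) * (1 + ‖y‖) ≤ max 1 ‖y‖ := by
    have := le_max_left 1 ‖y‖
    have := le_max_right 1 ‖y‖
    linarith
  rw [Real.norm_of_nonneg (by positivity), ← Real.mul_rpow (by norm_num) (by positivity)]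
  exact Real.rpow_le_rpow_of_nonpos (by positivity) h1 (by linarith)

lemma fl_int_ball (n : ℕ) (hn : 1 < n) :
    IntegrableOn (fun y : EuclideanSpace ℝ (Fin n) => ‖y‖ ^ (1 / 2 - (n : ℝ)))
      (Metric.ball 0 1) := by
  have : Nonempty (Fin n) := ⟨⟨0, by omega⟩⟩
  rw [integrableOn_fun_norm_addHaar (E := EuclideanSpace ℝ (Fin n)) volume
    (f := fun r : ℝ => r ^ (1 / 2 - (n : ℝ)))]
  have := (intervalIntegral.integrableOn_Ioo_rpow_iff (s := -(1/2)) (t := 1) one_pos).2 (by norm_num)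
  refine this.congr_fun ?_ measurableSet_Ioo
  intro r hr
  simp only [finrank_euclideanSpace, Fintype.card_fin, smul_eq_mul]
  rw [← Real.rpow_natCast, ← Real.rpow_add hr.1, Nat.cast_sub (by omega)]
  congr 1
  push_cast
  ring

/-- The mass of the truncated kernel blows up. -/
lemma fl_mass (n : ℕ) (hn : 1 < n) :
    Tendsto (fun s : ℝ => ∫ y : EuclideanSpace ℝ (Fin n), (max 1 ‖y‖) ^ (-((n : ℝ) + 2 * s)))
      (nhdsWithin 0 (Set.Ioi 0)) atTop := by
  have : Nonempty (Fin n) := ⟨⟨0, by omega⟩⟩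
  set K : ℝ := n * (volume : Measure (EuclideanSpace ℝ (Fin n))).real (Metric.ball 0 1) with hK
  have hKpos : 0 < K := by
    have : 0 < (volume : Measure (EuclideanSpace ℝ (Fin n))).real (Metric.ball 0 1) :=
      ENNReal.toReal_pos (Metric.measure_ball_pos _ _ one_pos).ne' measure_ball_lt_top.ne
    have : (0 : ℝ) < n := by exact_mod_cast (by omega : 0 < n)
    positivity
  have hlow : ∀ᶠ s : ℝ in nhdsWithin 0 (Set.Ioi 0), K * (2⁻¹ * s⁻¹) ≤
      ∫ y : EuclideanSpace ℝ (Fin n), (max 1 ‖y‖) ^ (-((n : ℝ) + 2 * s)) := by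
    filter_upwards [self_mem_nhdsWithin] with s hs
    have hs : 0 < s := hs
    rw [integral_fun_norm_addHaar (E := EuclideanSpace ℝ (Fin n)) volume
      (fun r : ℝ => (max 1 r) ^ (-((n : ℝ) + 2 * s)))]
    have hradial := (integrable_fun_norm_addHaar (E := EuclideanSpace ℝ (Fin n)) volume
      (f := fun r : ℝ => (max 1 r) ^ (-((n : ℝ) + 2 * s)))).1
        (fl_int_max n _ (by linarith))
    simp only [finrank_euclideanSpace, Fintype.card_fin, smul_eq_mul, nsmul_eq_mul] at hradial ⊢
    rw [← mul_assoc (n : ℝ), ← hK]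
    refine mul_le_mul_of_nonneg_left ?_ hKpos.le
    have h1 : ∫ r in Ioi (1 : ℝ), r ^ (-1 - 2 * s) = 2⁻¹ * s⁻¹ := by
      rw [integral_Ioi_rpow_of_lt (by linarith) one_pos]
      rw [Real.one_rpow, show -1 - 2 * s + 1 = -(2 * s) by ring, neg_div_neg_eq, one_div, mul_inv]
    rw [← h1]
    calc ∫ r in Ioi (1 : ℝ), r ^ (-1 - 2 * s)
        = ∫ r in Ioi (1 : ℝ), r ^ (n - 1) * (max 1 r) ^ (-((n : ℝ) + 2 * s)) := by
          refine setIntegral_congr_fun measurableSet_Ioi fun r hr => ?_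
          have hr : (1 : ℝ) < r := hr
          rw [max_eq_right hr.le, ← Real.rpow_natCast, ← Real.rpow_add (by linarith),
            Nat.cast_sub (by omega)]
          congr 1
          push_cast
          ring
      _ ≤ _ := by
          refine setIntegral_mono_set hradial ?_ (Ioi_subset_Ioi zero_le_one).eventuallyLE
          refine ae_restrict_of_forall_mem measurableSet_Ioi fun r hr => ?_
          have hr : (0 : ℝ) < r := hr
          simp only [Pi.zero_apply]
          positivity
  refine tendsto_atTop_mono' _ hlow ?_
  exact (tendsto_inv_nhdsGT_zero.const_mul_atTop (by norm_num)).const_mul_atTop hKpos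

/-- Ratio lemma. -/
lemma fl_ratio (n : ℕ) (hn : 1 < n) (F : EuclideanSpace ℝ (Fin n) → ℝ) (hF : Continuous F)
    (C M c D : ℝ) (hC : ∀ y, |F y| ≤ C * ‖y‖) (hM : ∀ y, |F y| ≤ M)
    (hD : ∀ s : ℝ, 0 < s → s < 1 / 4 →
      |∫ y : EuclideanSpace ℝ (Fin n), (F y - c) * (max 1 ‖y‖) ^ (-((n : ℝ) + 2 * s))| ≤ D) :
    Tendsto (fun s : ℝ => (∫ y : EuclideanSpace ℝ (Fin n), F y / ‖y‖ ^ ((n : ℝ) + 2 * s)) /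
      ∫ y : EuclideanSpace ℝ (Fin n), (max 1 ‖y‖) ^ (-((n : ℝ) + 2 * s)))
      (nhdsWithin 0 (Set.Ioi 0)) (nhds c) := by
  have hC0 : 0 ≤ C := by
    have h := (abs_nonneg _).trans (hC (EuclideanSpace.single ⟨0, by omega⟩ 1))
    simpa using h
  set g : EuclideanSpace ℝ (Fin n) → ℝ :=
    (Metric.ball 0 1).indicator (fun y => C * ‖y‖ ^ (1 / 2 - (n : ℝ))) with hg
  have hgint : Integrable g :=
    (IntegrableOn.integrable_indicator ((fl_int_ball n hn).const_mul C) measurableSet_ball)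
  have key : ∀ s : ℝ, 0 < s → s < 1 / 4 →
      |(∫ y : EuclideanSpace ℝ (Fin n), F y / ‖y‖ ^ ((n : ℝ) + 2 * s)) -
        c * ∫ y : EuclideanSpace ℝ (Fin n), (max 1 ‖y‖) ^ (-((n : ℝ) + 2 * s))|
        ≤ (∫ y, g y) + D := by
    intro s hs hs4
    have hwint := fl_int_max n ((n : ℝ) + 2 * s) (by linarith)
    have hFw : Integrable (fun y : EuclideanSpace ℝ (Fin n) =>
        F y * (max 1 ‖y‖) ^ (-((n : ℝ) + 2 * s))) :=
      hwint.bdd_mul (c := M) hF.aestronglyMeasurable (Eventually.of_forall hM)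
    have hbound : ∀ y : EuclideanSpace ℝ (Fin n), ‖F y / ‖y‖ ^ ((n : ℝ) + 2 * s) -
        F y * (max 1 ‖y‖) ^ (-((n : ℝ) + 2 * s))‖ ≤ g y := by
      intro y
      have hF0 : F 0 = 0 := by simpa using hC 0
      by_cases hy : y ∈ Metric.ball (0 : EuclideanSpace ℝ (Fin n)) 1
      · rw [hg, indicator_of_mem hy]
        rcases eq_or_ne y 0 with rfl | hy0
        · simp only [hF0, zero_div, zero_mul, sub_zero, norm_zero]
          positivity
        have hy1 : ‖y‖ < 1 := by simpa using hy
        have hyp : 0 < ‖y‖ := norm_pos_iff.2 hy0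
        rw [max_eq_left hy1.le, Real.one_rpow, div_eq_mul_inv, ← Real.rpow_neg hyp.le, ← mul_sub,
          Real.norm_eq_abs, abs_mul]
        have h1 : 1 ≤ ‖y‖ ^ (-((n : ℝ) + 2 * s)) :=
          Real.one_le_rpow_of_pos_of_le_one_of_nonpos hyp hy1.le (by
            have : (0 : ℝ) ≤ n := Nat.cast_nonneg n
            linarith)
        rw [abs_of_nonneg (a := ‖y‖ ^ (-((n : ℝ) + 2 * s)) - 1) (by linarith)]
        calc |F y| * (‖y‖ ^ (-((n : ℝ) + 2 * s)) - 1)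
            ≤ (C * ‖y‖) * ‖y‖ ^ (-((n : ℝ) + 2 * s)) := by
              gcongr
              · exact hC y
              · linarith
          _ = C * ‖y‖ ^ (1 - ((n : ℝ) + 2 * s)) := by
              rw [sub_eq_add_neg, Real.rpow_add hyp, Real.rpow_one, mul_assoc]
          _ ≤ _ := by
              gcongr C * ?_
              exact Real.rpow_le_rpow_of_exponent_ge hyp hy1.le (by linarith)
      · rw [hg, indicator_of_notMem hy]
        have hy1 : 1 ≤ ‖y‖ := by simpa using hy
        rw [max_eq_right hy1, Real.rpow_neg (norm_nonneg y), div_eq_mul_inv, sub_self, norm_zero]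
    have hdiff : Integrable (fun y : EuclideanSpace ℝ (Fin n) =>
        F y / ‖y‖ ^ ((n : ℝ) + 2 * s) - F y * (max 1 ‖y‖) ^ (-((n : ℝ) + 2 * s))) :=
      hgint.mono' (by
        have := hF.measurable
        exact Measurable.aestronglyMeasurable (by fun_prop)) (Eventually.of_forall hbound)
    have e1 : (∫ y : EuclideanSpace ℝ (Fin n), F y / ‖y‖ ^ ((n : ℝ) + 2 * s)) =
        (∫ y : EuclideanSpace ℝ (Fin n), (F y / ‖y‖ ^ ((n : ℝ) + 2 * s) -
          F y * (max 1 ‖y‖) ^ (-((n : ℝ) + 2 * s)))) +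
        ∫ y : EuclideanSpace ℝ (Fin n), F y * (max 1 ‖y‖) ^ (-((n : ℝ) + 2 * s)) := by
      rw [← integral_add hdiff hFw]
      simp
    have e2 : (∫ y : EuclideanSpace ℝ (Fin n), (F y - c) * (max 1 ‖y‖) ^ (-((n : ℝ) + 2 * s))) =
        (∫ y : EuclideanSpace ℝ (Fin n), F y * (max 1 ‖y‖) ^ (-((n : ℝ) + 2 * s))) -
        c * ∫ y : EuclideanSpace ℝ (Fin n), (max 1 ‖y‖) ^ (-((n : ℝ) + 2 * s)) := by
      simp only [sub_mul]
      rw [integral_sub hFw (hwint.const_mul c), integral_const_mul]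
    have b1 := norm_integral_le_of_norm_le hgint (Eventually.of_forall hbound)
    have b2 := hD s hs hs4
    rw [Real.norm_eq_abs] at b1
    rw [e1, add_sub_assoc, ← e2]
    exact (abs_add_le _ _).trans (add_le_add b1 b2)
  have hW := fl_mass n hn
  rw [tendsto_iff_norm_sub_tendsto_zero]
  refine squeeze_zero' (Eventually.of_forall fun _ => norm_nonneg _) ?_
    ((tendsto_const_nhds (x := (∫ y, g y) + D)).div_atTop hW)
  filter_upwards [Ioo_mem_nhdsGT (show (0 : ℝ) < 1 / 4 by norm_num), hW.eventually_gt_atTop 0]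
    with s hs hWs
  rw [le_div_iff₀ hWs]
  have := key s hs.1 hs.2
  refine le_trans (le_of_eq ?_) this
  rw [Real.norm_eq_abs]
  nth_rewrite 2 [← abs_of_pos hWs]
  rw [← abs_mul, sub_mul, div_mul_cancel₀ _ hWs.ne']

/-- Mean value bound for negative powers. -/
lemma fl_mvt (a b c p : ℝ) (hc : 0 < c) (ha : c ≤ a) (hb : c ≤ b) (hp : 0 ≤ p) :
    |a ^ (-p) - b ^ (-p)| ≤ p * c ^ (-p - 1) * |a - b| := by
  have := Convex.norm_image_sub_le_of_norm_hasDerivWithin_le (𝕜 := ℝ) (s := Ici c)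
    (f := fun t : ℝ => t ^ (-p)) (f' := fun t => (-p) * t ^ (-p - 1)) (C := p * c ^ (-p - 1))
    (x := b) (y := a)
    (fun t ht => (Real.hasDerivAt_rpow_const (Or.inl (hc.trans_le ht).ne')).hasDerivWithinAt)
    (fun t ht => by
      have ht : c ≤ t := ht
      have h0 : 0 < t := hc.trans_le ht
      rw [Real.norm_eq_abs, abs_mul, abs_neg, abs_of_nonneg hp, abs_of_nonneg (by positivity)]
      gcongr p * ?_
      exact Real.rpow_le_rpow_of_nonpos hc ht (by linarith))
    (convex_Ici c) hb ha
  simpa [Real.norm_eq_abs] using this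

/-- The oscillating integral stays bounded. -/
lemma fl_cos (n : ℕ) (hn : 0 < n) : ∃ D : ℝ, ∀ s : ℝ, 0 < s → s < 1 / 4 →
    |∫ y : EuclideanSpace ℝ (Fin n), Real.cos (y ⟨0, hn⟩) *
      (max 1 ‖y‖) ^ (-((n : ℝ) + 2 * s))| ≤ D := by
  set v : EuclideanSpace ℝ (Fin n) := EuclideanSpace.single ⟨0, hn⟩ Real.pi with hv
  have hvn : ‖v‖ = Real.pi := by simp [hv, abs_of_pos Real.pi_pos]
  set L : ℝ := (n + 1) * (1 + Real.pi) ^ ((n : ℝ) + 2) * Real.pi with hL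
  refine ⟨∫ y : EuclideanSpace ℝ (Fin n), L * (max 1 ‖y‖) ^ (-((n : ℝ) + 1)), ?_⟩
  intro s hs hs4
  have hmaj : Integrable (fun y : EuclideanSpace ℝ (Fin n) =>
      L * (max 1 ‖y‖) ^ (-((n : ℝ) + 1))) := (fl_int_max n _ (by linarith)).const_mul L
  have hwint := fl_int_max n ((n : ℝ) + 2 * s) (by linarith)
  have hcm : Continuous (fun y : EuclideanSpace ℝ (Fin n) => Real.cos (y ⟨0, hn⟩)) := by fun_prop
  have hb : ∀ y : EuclideanSpace ℝ (Fin n), ‖Real.cos (y ⟨0, hn⟩)‖ ≤ 1 :=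
    fun y => Real.abs_cos_le_one _
  have i1 := hwint.bdd_mul (c := 1) hcm.aestronglyMeasurable (Eventually.of_forall hb)
  have i2 := (hwint.comp_add_right v).bdd_mul (c := 1) hcm.aestronglyMeasurable
    (Eventually.of_forall hb)
  have e1 : (∫ y : EuclideanSpace ℝ (Fin n), Real.cos (y ⟨0, hn⟩) *
      (max 1 ‖y‖) ^ (-((n : ℝ) + 2 * s))) =
      - ∫ y : EuclideanSpace ℝ (Fin n), Real.cos (y ⟨0, hn⟩) *
      (max 1 ‖y + v‖) ^ (-((n : ℝ) + 2 * s)) := by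
    rw [← integral_add_right_eq_self _ v, ← integral_neg]
    congr 1
    ext y
    simp [hv, Real.cos_add_pi]
  have e2 : 2 * (∫ y : EuclideanSpace ℝ (Fin n), Real.cos (y ⟨0, hn⟩) *
      (max 1 ‖y‖) ^ (-((n : ℝ) + 2 * s))) =
      ∫ y : EuclideanSpace ℝ (Fin n), (Real.cos (y ⟨0, hn⟩) *
      (max 1 ‖y‖) ^ (-((n : ℝ) + 2 * s)) - Real.cos (y ⟨0, hn⟩) *
      (max 1 ‖y + v‖) ^ (-((n : ℝ) + 2 * s))) := by
    rw [integral_sub i1 i2]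
    linarith
  have hbd : ∀ y : EuclideanSpace ℝ (Fin n), ‖Real.cos (y ⟨0, hn⟩) *
      (max 1 ‖y‖) ^ (-((n : ℝ) + 2 * s)) - Real.cos (y ⟨0, hn⟩) *
      (max 1 ‖y + v‖) ^ (-((n : ℝ) + 2 * s))‖ ≤ L * (max 1 ‖y‖) ^ (-((n : ℝ) + 1)) := by
    intro y
    have hpi := Real.pi_pos
    have hn0 : (0 : ℝ) ≤ n := Nat.cast_nonneg n
    rw [← mul_sub, norm_mul]
    have ha1 : 1 ≤ max 1 ‖y‖ := le_max_left _ _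
    have hb1 : 1 ≤ max 1 ‖y + v‖ := le_max_left _ _
    have hn1 : |‖y‖ - ‖y + v‖| ≤ Real.pi := by
      have := abs_norm_sub_norm_le y (y + v)
      simpa [hvn] using this
    have hab : |max 1 ‖y‖ - max 1 ‖y + v‖| ≤ Real.pi := by
      have := abs_max_sub_max_le_abs ‖y‖ ‖y + v‖ 1
      rw [max_comm 1, max_comm 1]
      exact this.trans hn1
    set a := max 1 ‖y‖
    set b := max 1 ‖y + v‖
    have hc : 0 < a / (1 + Real.pi) := by positivity
    have h1 := fl_mvt a b (a / (1 + Real.pi)) ((n : ℝ) + 2 * s) hc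
      (div_le_self (by linarith) (by linarith))
      (by
        rw [div_le_iff₀ (by positivity)]
        have := (abs_le.1 hab).2
        nlinarith) (by positivity)
    have h2 : (a / (1 + Real.pi)) ^ (-((n : ℝ) + 2 * s) - 1) ≤
        (1 + Real.pi) ^ ((n : ℝ) + 2) * a ^ (-((n : ℝ) + 1)) := by
      rw [Real.div_rpow (by positivity) (by positivity), div_eq_mul_inv,
        ← Real.rpow_neg (by positivity), mul_comm]
      gcongr
      · linarith
      · linarith
      · linarith
    calc _ ≤ 1 * (((n : ℝ) + 2 * s) * (a / (1 + Real.pi)) ^ (-((n : ℝ) + 2 * s) - 1) * |a - b|) := by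
          gcongr
          · exact hb y
          · exact h1
      _ ≤ 1 * (((n : ℝ) + 1) * ((1 + Real.pi) ^ ((n : ℝ) + 2) * a ^ (-((n : ℝ) + 1))) * Real.pi) := by
          gcongr
          linarith
      _ = _ := by rw [hL]; ring
  have := norm_integral_le_of_norm_le hmaj (Eventually.of_forall hbd)
  rw [← e2, Real.norm_eq_abs, abs_mul, abs_two] at this
  have h0 := abs_nonneg (∫ y : EuclideanSpace ℝ (Fin n), Real.cos (y ⟨0, hn⟩) *
      (max 1 ‖y‖) ^ (-((n : ℝ) + 2 * s)))
  linarith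

/-- For `n > 1` and `u ∈ C₀^∞(ℝⁿ)`, `(−Δ)^s u(x) → u(x)` as `s → 0⁺`, for every `x`. -/
theorem fracLap_tendsto_id (n : ℕ) (hn : 1 < n) (u : EuclideanSpace ℝ (Fin n) → ℝ)
    (hsmooth : ContDiff ℝ (⊤ : ℕ∞) u) (hsupp : HasCompactSupport u) (x : EuclideanSpace ℝ (Fin n)) :
    Tendsto (fun s => fracLap n (by omega) s u x)
      (nhdsWithin 0 (Set.Ioi 0)) (nhds (u x)) := by
  have hn0 : 0 < n := by omega
  have hu : Continuous u := hsmooth.continuous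
  obtain ⟨D, hD⟩ := fl_cos n hn0
  have hA := fl_ratio n hn (fun ζ => 1 - Real.cos (ζ ⟨0, hn0⟩)) (by fun_prop) 1 2 1 D
    (fun y => by
      have h1 := Real.abs_cos_sub_cos_le 0 (y ⟨0, hn0⟩)
      have h2 := PiLp.norm_apply_le y (⟨0, hn0⟩ : Fin n)
      rw [Real.norm_eq_abs] at h2
      simp only [Real.cos_zero, zero_sub, abs_neg] at h1
      linarith)
    (fun y => by
      have h1 := Real.neg_one_le_cos (y ⟨0, hn0⟩)
      have h2 := Real.cos_le_one (y ⟨0, hn0⟩)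
      rw [abs_le]; constructor <;> linarith)
    (fun s hs hs4 => by
      have := hD s hs hs4
      simpa [integral_neg] using this)
  obtain ⟨C, hC⟩ := ContDiff.lipschitzWith_of_hasCompactSupport hsupp hsmooth (by simp)
  obtain ⟨M, hM⟩ := hsupp.exists_bound_of_continuous hu
  have hui : Integrable u := hu.integrable_of_hasCompactSupport hsupp
  have hG : Integrable (fun y => u (x + y) + u (x - y)) :=
    (hui.comp_add_left x).add (hui.comp_sub_left x)
  have hB := fl_ratio n hn (fun y => u (x + y) + u (x - y) - 2 * u x) (by fun_prop)
    (2 * C) (4 * M) (-(2 * u x)) (∫ y, ‖u (x + y) + u (x - y)‖)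
    (fun y => by
      have h1 := hC.norm_sub_le (x + y) x
      have h2 := hC.norm_sub_le (x - y) x
      simp only [add_sub_cancel_left, sub_sub_cancel_left, norm_neg, Real.norm_eq_abs] at h1 h2
      have h3 := abs_add_le (u (x + y) - u x) (u (x - y) - u x)
      rw [show u (x + y) - u x + (u (x - y) - u x) = u (x + y) + u (x - y) - 2 * u x by ring] at h3
      linarith)
    (fun y => by
      have h1 := abs_le.1 (hM (x + y))
      have h2 := abs_le.1 (hM (x - y))
      have h3 := abs_le.1 (hM x)
      rw [abs_le]; constructor <;> linarith)
    (fun s hs hs4 => by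
      rw [← Real.norm_eq_abs]
      refine norm_integral_le_of_norm_le hG.norm (Eventually.of_forall fun y => ?_)
      rw [norm_mul, sub_neg_eq_add, sub_add_cancel]
      refine mul_le_of_le_one_right (norm_nonneg _) ?_
      rw [Real.norm_of_nonneg (by positivity)]
      refine Real.rpow_le_one_of_one_le_of_nonpos (le_max_left _ _) ?_
      have : (0 : ℝ) ≤ n := Nat.cast_nonneg n
      linarith)
  have hlim := (hB.div hA one_ne_zero).const_mul (-(1 / 2))
  rw [show -(1 / 2) * (-(2 * u x) / 1) = u x by ring] at hlim
  refine hlim.congr' ?_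
  filter_upwards [(fl_mass n hn).eventually_gt_atTop 0] with s hW
  simp only [Pi.div_apply, fracLap, fracLapConst]
  rw [div_div_div_cancel_right₀ hW.ne']
  ring
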